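/- Let C = 1.25506, E(n) = (n/log n)·(log 4 − C − (log 2 · log 4)/log(2n)), and k(m,n) = log(C(m+n,n))/log(m+n), where C(m+n,n) is the binomial coefficient and log is the natural logarithm. Then for every integer n ≥ 2, k(n,n) > π(n) + E(n) − 1, where π(n) is the number of primes ≤ n. -/

import Mathlib

/-- `E(n) = (n/log n)·(log 4 − C − log 2 · log 4 / log(2n))` with `C = 1.25506`. -/
noncomputable def E (n : ℕ) : ℝ :=
  ((n : ℝ) / Real.log n) *
    (Real.log 4 - 1.25506 - Real.log 2 * Real.log 4 / Real.log (2 * (n : ℝ)))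

/-- `k(m,n) = log(C(m+n,n)) / log(m+n)`. -/
noncomputable def kfun (m n : ℕ) : ℝ :=
  Real.log (Nat.choose (m + n) n) / Real.log ((m : ℝ) + n)

/-- Forces evaluation of a numeral in the kernel before passing it on. -/
def forceNat (n : ℕ) (k : ℕ → Bool) : Bool :=
  Nat.rec (k 0) (fun i _ => k (i + 1)) n

theorem forceNat_eq (n : ℕ) (k : ℕ → Bool) : forceNat n k = k n := by
  cases n <;> rfl

/-- Cheap necessary condition for primality. -/
def isP (m : ℕ) : Bool :=
  bif Nat.blt m 13 then (m.beq 2 || m.beq 3 || m.beq 5 || m.beq 7 || m.beq 11)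
  else bif Nat.blt m 142 then (Nat.gcd m 2310).beq 1
  else (Nat.gcd m 10014646650599190067509233131649940057366334653200433090).beq 1

/-- Certified computation of upper bounds of the prime counting function and related sums. -/
def run : ℕ → ℕ → ℕ → ℕ → ℕ → ℕ → ℕ → ℕ → Bool
  | 0, _, c, L, W, c', L', W' => c.beq c' && (L.beq L' && W.beq W')
  | f + 1, m, c, L, W, c', L', W' =>
    Nat.ble (c * L) (1255 * m * 1000000 + 400000000) &&
    forceNat (m + 1) fun m1 =>
    forceNat (bif isP m1 then c + 1 else c) fun c1 =>
    forceNat (L + 1000000000 * (2 * m + 1) / (2 * m * m1) + 1) fun L1 =>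
    forceNat (W + c * 1000000000 / m + 1) fun W1 =>
    run f m1 c1 L1 W1 c' L' W'

theorem run_0 : run 1996 4 2 1386294362 980829254 303 7606080136 364155972826 = true := by decide +kernel
theorem run_1 : run 2000 2000 303 7606080136 364155972826 550 8299228332 651553704690 = true := by decide +kernel
theorem run_2 : run 2000 4000 550 8299228332 651553704690 783 8704694483 919421596212 = true := by decide +kernel
theorem run_3 : run 2000 6000 783 8704694483 919421596212 1007 8992377564 1175974287468 = true := by decide +kernel
theorem run_4 : run 2000 8000 1007 8992377564 1175974287468 1229 9215522122 1424548284989 = true := by decide +kernel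
theorem run_5 : run 2000 10000 1229 9215522122 1424548284989 1438 9397844691 1667204512588 = true := by decide +kernel
theorem run_6 : run 2000 12000 1438 9397844691 1667204512588 1652 9551996374 1905093484922 = true := by decide +kernel
theorem run_7 : run 2000 14000 1652 9551996374 1905093484922 1862 9685528772 2139067457627 = true := by decide +kernel
theorem run_8 : run 2000 16000 1862 9685528772 2139067457627 2064 9803312805 2369825402432 = true := by decide +kernel
theorem run_9 : run 2000 18000 2064 9803312805 2369825402432 2262 9908674347 2597451409663 = true := by decide +kernel

theorem isP_of_prime (m : ℕ) (hm : m.Prime) : isP m = true := by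
  unfold isP
  by_cases h1 : m < 13
  · interval_cases m <;> first | rfl | (exfalso; revert hm; norm_num)
  · by_cases h2 : m < 142
    · have e1 : Nat.blt m 13 = false := by
        rw [Bool.eq_false_iff]; intro h; exact h1 (by simpa [Nat.blt_eq] using h)
      have e2 : Nat.blt m 142 = true := by simpa [Nat.blt_eq] using h2
      rw [e1, e2]
      have : Nat.Coprime m 2310 := by
        rw [Nat.Prime.coprime_iff_not_dvd hm]
        intro h
        have h3 : m ∣ Nat.factorial 12 := h.trans (by decide +kernel)
        have := (Nat.Prime.dvd_factorial hm).1 h3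
        omega
      simpa using this
    · have e1 : Nat.blt m 13 = false := by
        rw [Bool.eq_false_iff]; intro h; exact h1 (by simpa [Nat.blt_eq] using h)
      have e2 : Nat.blt m 142 = false := by
        rw [Bool.eq_false_iff]; intro h; exact h2 (by simpa [Nat.blt_eq] using h)
      rw [e1, e2]
      have : Nat.Coprime m 10014646650599190067509233131649940057366334653200433090 := by
        rw [Nat.Prime.coprime_iff_not_dvd hm]
        intro h
        have h3 : m ∣ Nat.factorial 141 := h.trans (by decide +kernel)
        have := (Nat.Prime.dvd_factorial hm).1 h3
        omega
      simpa using this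

open Chebyshev in
theorem theta_succ (m : ℕ) : theta ((m + 1 : ℕ) : ℝ) =
    theta (m : ℝ) + if (m + 1).Prime then Real.log ((m + 1 : ℕ) : ℝ) else 0 := by
  unfold theta
  rw [Nat.floor_natCast, Nat.floor_natCast, Finset.sum_filter, Finset.sum_filter,
    Finset.sum_Ioc_succ_top (Nat.zero_le m)]

theorem pi_succ (m : ℕ) : (Nat.primeCounting (m + 1) : ℝ) =
    Nat.primeCounting m + if (m + 1).Prime then 1 else 0 := by
  unfold Nat.primeCounting Nat.primeCounting'
  rw [Nat.count_succ]
  split_ifs <;> simp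

/-- `V m = π(m) log m - θ(m)`. -/
noncomputable def V (m : ℕ) : ℝ :=
  (Nat.primeCounting m : ℝ) * Real.log m - Chebyshev.theta m

theorem V_succ (m : ℕ) : V (m + 1) =
    (Nat.primeCounting m : ℝ) * Real.log ((m + 1 : ℕ) : ℝ) - Chebyshev.theta m := by
  unfold V
  rw [pi_succ, theta_succ]
  split_ifs <;> ring

theorem log_step (m : ℕ) (hm : 1 ≤ m) :
    Real.log ((m + 1 : ℕ) : ℝ) ≤ Real.log m + 1 / m := by
  have h0 : (0 : ℝ) < m := by exact_mod_cast hm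
  have h := Real.log_le_sub_one_of_pos (show (0 : ℝ) < ((m + 1 : ℕ) : ℝ) / m by positivity)
  rw [Real.log_div (by positivity) (by positivity)] at h
  have : ((m + 1 : ℕ) : ℝ) / m - 1 = 1 / m := by push_cast; field_simp; ring
  linarith

theorem log_step2 (m : ℕ) (hm : 1 ≤ m) :
    Real.log ((m + 1 : ℕ) : ℝ) ≤ Real.log m + (2 * m + 1) / (2 * m * (m + 1)) := by
  have h0 : (0 : ℝ) < m := by exact_mod_cast hm
  have hp : (0 : ℝ) < ((m + 1 : ℕ) : ℝ) / m := by positivity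
  have h1 : 0 ≤ Real.log (((m + 1 : ℕ) : ℝ) / m) := by
    apply Real.log_nonneg
    rw [le_div_iff₀ h0]; push_cast; linarith
  have h := Real.self_le_sinh_iff.2 h1
  rw [Real.sinh_eq, Real.exp_neg, Real.exp_log hp,
    Real.log_div (by positivity) (by positivity)] at h
  have : (((m + 1 : ℕ) : ℝ) / m - (((m + 1 : ℕ) : ℝ) / m)⁻¹) / 2
      = (2 * m + 1) / (2 * m * (m + 1)) := by push_cast; field_simp; ring
  linarith

/-- Invariant of the computation. -/
def RunInv (m c L W : ℕ) : Prop :=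
  Nat.primeCounting m ≤ c ∧ 1000000000 * Real.log m ≤ L ∧ 1000000000 * V m ≤ W

theorem nat_div_bound (a b : ℕ) (hb : 0 < b) : (a : ℝ) / b ≤ ((a / b : ℕ) : ℝ) + 1 := by
  have hb' : (0 : ℝ) < b := by exact_mod_cast hb
  rw [div_le_iff₀ hb']
  have := Nat.lt_div_mul_add (a := a) hb
  have h : (a : ℝ) ≤ ((a / b * b + b : ℕ) : ℝ) := by exact_mod_cast this.le
  push_cast at h ⊢
  linarith

theorem Inv_step (m c L W : ℕ) (hm : 1 ≤ m) (h : RunInv m c L W) :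
    RunInv (m + 1) (bif isP (m + 1) then c + 1 else c)
      (L + 1000000000 * (2 * m + 1) / (2 * m * (m + 1)) + 1)
      (W + c * 1000000000 / m + 1) := by
  obtain ⟨h1, h2, h3⟩ := h
  have h0 : (0 : ℝ) < m := by exact_mod_cast hm
  refine ⟨?_, ?_, ?_⟩
  · have := pi_succ m
    by_cases hp : (m + 1).Prime
    · rw [isP_of_prime _ hp]
      rw [if_pos hp] at this
      have : Nat.primeCounting (m + 1) = Nat.primeCounting m + 1 := by exact_mod_cast this
      simp only [cond_true]; omega
    · rw [if_neg hp] at this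
      have : Nat.primeCounting (m + 1) = Nat.primeCounting m := by
        rw [add_zero] at this; exact_mod_cast this
      cases isP (m + 1) <;> simp <;> omega
  · have hs := log_step2 m hm
    have hd := nat_div_bound (1000000000 * (2 * m + 1)) (2 * m * (m + 1)) (by positivity)
    push_cast at hd hs ⊢
    rw [mul_div_assoc] at hd
    linarith
  · have hs := log_step m hm
    have hd := nat_div_bound (c * 1000000000) m (by positivity)
    have h1' : (Nat.primeCounting m : ℝ) ≤ c := by exact_mod_cast h1
    have hV : V (m + 1) ≤ V m + Nat.primeCounting m * (1 / m) := by
      rw [V_succ]; unfold V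
      have := mul_le_mul_of_nonneg_left hs (Nat.cast_nonneg (α := ℝ) (Nat.primeCounting m))
      linarith
    have : (Nat.primeCounting m : ℝ) * (1 / m) ≤ c * (1 / m) := by gcongr
    have e : ((c * 1000000000 : ℕ) : ℝ) / m = 1000000000 * (c * (1 / m)) := by
      push_cast; ring
    rw [e] at hd
    push_cast at hd ⊢
    linarith

theorem run_spec (f : ℕ) : ∀ (m c L W c' L' W' : ℕ), 1 ≤ m → RunInv m c L W →
    run f m c L W c' L' W' = true →
    (∀ n, m ≤ n → n < m + f → (Nat.primeCounting n : ℝ) * Real.log n ≤ 1.255 * n + 0.4) ∧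
    RunInv (m + f) c' L' W' := by
  induction f with
  | zero =>
    intro m c L W c' L' W' hm hI hr
    simp only [run, Bool.and_eq_true, Nat.beq_eq] at hr
    obtain ⟨rfl, rfl, rfl⟩ := hr
    exact ⟨fun n h1 h2 => by omega, hI⟩
  | succ f ih =>
    intro m c L W c' L' W' hm hI hr
    simp only [run, forceNat_eq, Bool.and_eq_true, Nat.ble_eq] at hr
    obtain ⟨hc, hr⟩ := hr
    obtain ⟨i1, i2⟩ := ih _ _ _ _ _ _ _ (by omega) (Inv_step m c L W hm hI) hr
    refine ⟨fun n h1 h2 => ?_, ?_⟩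
    · rcases Nat.eq_or_lt_of_le h1 with rfl | h
      · obtain ⟨j1, j2, -⟩ := hI
        have j1' : (Nat.primeCounting m : ℝ) ≤ c := by exact_mod_cast j1
        have hc' : (c : ℝ) * L ≤ 1255 * m * 1000000 + 400000000 := by exact_mod_cast hc
        have hl : 0 ≤ Real.log m := Real.log_natCast_nonneg m
        have k1 : (Nat.primeCounting m : ℝ) * Real.log m ≤ c * Real.log m := by gcongr
        have k2 : (c : ℝ) * (1000000000 * Real.log m) ≤ c * L := by gcongr
        linarith
      · exact i1 n (by omega) (by omega)
    · rw [show m + (f + 1) = m + 1 + f by ring]; exact i2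

theorem Inv_four : RunInv 4 2 1386294362 980829254 := by
  have hpi : Nat.primeCounting 4 = 2 := by decide
  have h4 : Real.log (4 : ℕ) = 2 * Real.log 2 := by
    rw [show ((4 : ℕ) : ℝ) = 2 ^ 2 by norm_num, Real.log_pow]; norm_num
  have hth : Chebyshev.theta ((4 : ℕ) : ℝ) = Real.log 2 + Real.log 3 := by
    have e1 := theta_succ 3
    have e2 := theta_succ 2
    have e3 := theta_succ 1
    have e4 : Chebyshev.theta ((1 : ℕ) : ℝ) = 0 := by simp
    norm_num at e1 e2 e3 e4 ⊢
    rw [e1, e2, e3]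
  refine ⟨hpi.le, ?_, ?_⟩
  · rw [h4]; have := Real.log_two_lt_d9; norm_num; linarith
  · unfold V
    rw [hpi, h4, hth]
    have := Real.log_two_lt_d9
    have := Real.log_three_gt_d9
    norm_num; linarith

theorem small_range_bound : (∀ n : ℕ, 4 ≤ n → n < 20000 →
    (Nat.primeCounting n : ℝ) * Real.log n ≤ 1.255 * n + 0.4) ∧ V 20000 ≤ 2598 := by
  obtain ⟨a0, i0⟩ := run_spec _ _ _ _ _ _ _ _ (by norm_num) Inv_four run_0
  obtain ⟨a1, i1⟩ := run_spec _ _ _ _ _ _ _ _ (by norm_num) i0 run_1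
  obtain ⟨a2, i2⟩ := run_spec _ _ _ _ _ _ _ _ (by norm_num) i1 run_2
  obtain ⟨a3, i3⟩ := run_spec _ _ _ _ _ _ _ _ (by norm_num) i2 run_3
  obtain ⟨a4, i4⟩ := run_spec _ _ _ _ _ _ _ _ (by norm_num) i3 run_4
  obtain ⟨a5, i5⟩ := run_spec _ _ _ _ _ _ _ _ (by norm_num) i4 run_5
  obtain ⟨a6, i6⟩ := run_spec _ _ _ _ _ _ _ _ (by norm_num) i5 run_6
  obtain ⟨a7, i7⟩ := run_spec _ _ _ _ _ _ _ _ (by norm_num) i6 run_7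
  obtain ⟨a8, i8⟩ := run_spec _ _ _ _ _ _ _ _ (by norm_num) i7 run_8
  obtain ⟨a9, i9⟩ := run_spec _ _ _ _ _ _ _ _ (by norm_num) i8 run_9
  constructor
  · intro n h1 h2
    rcases lt_or_ge n 2000 with h | h
    · exact a0 n (by omega) (by omega)
    rcases lt_or_ge n 4000 with h | h
    · exact a1 n (by omega) (by omega)
    rcases lt_or_ge n 6000 with h | h
    · exact a2 n (by omega) (by omega)
    rcases lt_or_ge n 8000 with h | h
    · exact a3 n (by omega) (by omega)
    rcases lt_or_ge n 10000 with h | h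
    · exact a4 n (by omega) (by omega)
    rcases lt_or_ge n 12000 with h | h
    · exact a5 n (by omega) (by omega)
    rcases lt_or_ge n 14000 with h | h
    · exact a6 n (by omega) (by omega)
    rcases lt_or_ge n 16000 with h | h
    · exact a7 n (by omega) (by omega)
    rcases lt_or_ge n 18000 with h | h
    · exact a8 n (by omega) (by omega)
    · exact a9 n (by omega) (by omega)
  · have h := i9.2.2
    norm_num at h
    linarith


open ArithmeticFunction in
theorem log_fact_eq (M : ℕ) : ∀ N : ℕ, N ≤ M →
    Real.log (Nat.factorial N : ℝ) = ∑ d ∈ Finset.Ioc 0 M, vonMangoldt d * ((N / d : ℕ) : ℝ) := by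
  intro N
  induction N with
  | zero => intro _; simp
  | succ N ih =>
    intro h
    rw [Nat.factorial_succ, Nat.cast_mul, Real.log_mul (by positivity) (by positivity),
      ih (by omega), ← vonMangoldt_sum]
    have : ∑ i ∈ (N + 1).divisors, vonMangoldt i
        = ∑ d ∈ Finset.Ioc 0 M, if d ∣ N + 1 then vonMangoldt d else 0 := by
      rw [← Finset.sum_filter]
      apply Finset.sum_congr _ (fun _ _ => rfl)
      ext d
      simp only [Nat.mem_divisors, Finset.mem_filter, Finset.mem_Ioc]
      constructor
      · rintro ⟨h1, -⟩
        exact ⟨⟨Nat.pos_of_dvd_of_pos h1 (by omega), (Nat.le_of_dvd (by omega) h1).trans h⟩, h1⟩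
      · rintro ⟨-, h1⟩; exact ⟨h1, by omega⟩
    rw [this, ← Finset.sum_add_distrib]
    apply Finset.sum_congr rfl
    intro d _
    rw [Nat.succ_div]
    split_ifs <;> push_cast <;> ring

open ArithmeticFunction in
theorem cheb_lower (N : ℕ) : Chebyshev.psi (N : ℝ) - Chebyshev.psi ((N / 6 : ℕ) : ℝ) ≤
    Real.log (Nat.factorial N : ℝ) + Real.log (Nat.factorial (N / 30) : ℝ)
    - Real.log (Nat.factorial (N / 2) : ℝ) - Real.log (Nat.factorial (N / 3) : ℝ)
    - Real.log (Nat.factorial (N / 5) : ℝ) := by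
  rw [log_fact_eq N N le_rfl, log_fact_eq N (N / 30) (Nat.div_le_self _ _),
    log_fact_eq N (N / 2) (Nat.div_le_self _ _), log_fact_eq N (N / 3) (Nat.div_le_self _ _),
    log_fact_eq N (N / 5) (Nat.div_le_self _ _)]
  rw [← Finset.sum_add_distrib, ← Finset.sum_sub_distrib, ← Finset.sum_sub_distrib,
    ← Finset.sum_sub_distrib]
  have e : Chebyshev.psi (N : ℝ) - Chebyshev.psi ((N / 6 : ℕ) : ℝ)
      = ∑ d ∈ Finset.Ioc 0 N, if N / 6 < d then vonMangoldt d else 0 := by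
    unfold Chebyshev.psi
    rw [Nat.floor_natCast, Nat.floor_natCast, ← Finset.sum_filter, sub_eq_iff_eq_add,
      ← Finset.sum_filter_add_sum_filter_not (Finset.Ioc 0 N) (fun d => N / 6 < d)]
    congr 1
    apply Finset.sum_congr _ (fun _ _ => rfl)
    ext d
    simp only [Finset.mem_filter, Finset.mem_Ioc]
    omega
  rw [e]
  apply Finset.sum_le_sum
  intro d hd
  rw [Finset.mem_Ioc] at hd
  have hL : 0 ≤ vonMangoldt d := vonMangoldt_nonneg
  have c1 : ∀ k, N / k / d = N / d / k := fun k => by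
    rw [Nat.div_div_eq_div_mul, Nat.div_div_eq_div_mul, mul_comm]
  rw [c1, c1, c1, c1]
  set m := N / d with hm
  have hm1 : 1 ≤ m := (Nat.one_le_div_iff hd.1).2 hd.2
  have hkey : (m / 2 + m / 3 + m / 5 : ℕ) + (if N / 6 < d then 1 else 0) ≤ m + m / 30 := by
    split_ifs with h
    · have : m < 6 := by
        rw [hm, Nat.div_lt_iff_lt_mul hd.1]
        rw [Nat.div_lt_iff_lt_mul (by norm_num)] at h
        linarith
      interval_cases m <;> simp
    · omega
  have hkey' : ((m / 2 : ℕ) : ℝ) + ((m / 3 : ℕ) : ℝ) + ((m / 5 : ℕ) : ℝ)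
      + (if N / 6 < d then 1 else 0) ≤ m + ((m / 30 : ℕ) : ℝ) := by
    exact_mod_cast hkey
  have := mul_le_mul_of_nonneg_left hkey' hL
  have e2 : (if N / 6 < d then vonMangoldt d else 0)
      = vonMangoldt d * (if N / 6 < d then 1 else 0) := by split_ifs <;> simp
  rw [e2]
  linarith

/-- `H y = y log y - y + 1`. -/
noncomputable def H (y : ℝ) : ℝ := y * Real.log y - y + 1

theorem H_nonneg {y : ℝ} (hy : 0 < y) : 0 ≤ H y := by
  unfold H
  have := Real.one_sub_inv_le_log_of_pos hy
  have := mul_le_mul_of_nonneg_left this hy.le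
  rw [mul_sub, mul_inv_cancel₀ hy.ne'] at this
  linarith

theorem H_mono {x y : ℝ} (hx : 1 ≤ x) (hxy : x ≤ y) : H x ≤ H y := by
  -- convexity: `H y ≥ H x + log x (y - x)`
  have hx0 : 0 < x := by linarith
  have hy0 : 0 < y := by linarith
  have h := Real.one_sub_inv_le_log_of_pos (show 0 < y / x by positivity)
  rw [Real.log_div hy0.ne' hx0.ne', inv_div] at h
  have h2 := mul_le_mul_of_nonneg_left h hy0.le
  have : y * (1 - x / y) = y - x := by field_simp
  rw [this] at h2
  have h3 : 0 ≤ Real.log x * (y - x) := mul_nonneg (Real.log_nonneg hx) (by linarith)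
  unfold H
  linarith

theorem fact_lower (n : ℕ) (hn : 1 ≤ n) : H n ≤ Real.log (Nat.factorial n : ℝ) := by
  induction n, hn using Nat.le_induction with
  | base => simp [H]
  | succ n hn ih =>
    rw [Nat.factorial_succ, Nat.cast_mul, Real.log_mul (by positivity) (by positivity)]
    have hs := log_step n hn
    have h0 : (0 : ℝ) < n := by exact_mod_cast hn
    have := mul_le_mul_of_nonneg_left hs h0.le
    have e : (n : ℝ) * (Real.log n + 1 / n) = n * Real.log n + 1 := by field_simp
    rw [e] at this
    unfold H at *
    push_cast at *
    linarith

theorem fact_upper (n : ℕ) (hn : 1 ≤ n) :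
    Real.log (Nat.factorial n : ℝ) ≤ H n + Real.log n := by
  induction n, hn using Nat.le_induction with
  | base => simp [H]
  | succ n hn ih =>
    rw [Nat.factorial_succ, Nat.cast_mul, Real.log_mul (by positivity) (by positivity)]
    have h0 : (0 : ℝ) < n := by exact_mod_cast hn
    have hs : 1 / ((n : ℝ) + 1) ≤ Real.log ((n + 1 : ℕ) : ℝ) - Real.log n := by
      have h := Real.one_sub_inv_le_log_of_pos
        (show (0 : ℝ) < ((n + 1 : ℕ) : ℝ) / n by positivity)
      rw [Real.log_div (by positivity) (by positivity)] at h
      have : 1 - (((n + 1 : ℕ) : ℝ) / n)⁻¹ = 1 / ((n : ℝ) + 1) := by push_cast; field_simp; ring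
      linarith
    have h1 : (0 : ℝ) < (n : ℝ) + 1 := by linarith
    have := mul_le_mul_of_nonneg_left hs h1.le
    rw [mul_one_div_cancel h1.ne'] at this
    unfold H at *
    push_cast at *
    linarith

theorem fact_div_lower (N k : ℕ) (hk : 2 ≤ k) (hN : k ≤ N) :
    H ((N : ℝ) / k) - Real.log N ≤ Real.log (Nat.factorial (N / k) : ℝ) := by
  have hk0 : (0 : ℝ) < k := by exact_mod_cast (by omega : 0 < k)
  have h := fact_lower (N / k + 1) (Nat.le_add_left 1 _)
  rw [Nat.factorial_succ, Nat.cast_mul, Real.log_mul (by positivity) (by positivity)] at h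
  have h1 : (N : ℝ) / k ≤ ((N / k + 1 : ℕ) : ℝ) := by
    have := nat_div_bound N k (by omega); push_cast at *; linarith
  have h2 : H ((N : ℝ) / k) ≤ H ((N / k + 1 : ℕ) : ℝ) := by
    apply H_mono _ h1
    rw [le_div_iff₀ hk0, one_mul]; exact_mod_cast hN
  have h3 : N / k + 1 ≤ N := Nat.div_lt_self (by omega) (by omega)
  have h4 : Real.log ((N / k + 1 : ℕ) : ℝ) ≤ Real.log N :=
    Real.log_le_log (by positivity) (by exact_mod_cast h3)
  linarith

theorem fact_div_upper (N k : ℕ) (hk : 1 ≤ k) (hN : 1 ≤ N) :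
    Real.log (Nat.factorial (N / k) : ℝ) ≤ H ((N : ℝ) / k) + Real.log N := by
  have hk0 : (0 : ℝ) < k := by exact_mod_cast hk
  have hN0 : (0 : ℝ) < N := by exact_mod_cast hN
  rcases Nat.eq_zero_or_pos (N / k) with h | h
  · rw [h]
    have := H_nonneg (show 0 < (N : ℝ) / k by positivity)
    have := Real.log_natCast_nonneg N
    simp; linarith
  · have h1 := fact_upper (N / k) h
    have h2 : H ((N / k : ℕ) : ℝ) ≤ H ((N : ℝ) / k) :=
      H_mono (by exact_mod_cast h) Nat.cast_div_le
    have h4 : Real.log ((N / k : ℕ) : ℝ) ≤ Real.log N :=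
      Real.log_le_log (by exact_mod_cast h) (by exact_mod_cast Nat.div_le_self N k)
    linarith

theorem cheb_step (N : ℕ) (hN : 5 ≤ N) :
    Chebyshev.psi (N : ℝ) ≤ Chebyshev.psi ((N / 6 : ℕ) : ℝ) + 0.9216 * N + 5 * Real.log N - 1 := by
  have h0 := cheb_lower N
  have h1 := fact_upper N (by omega)
  have h2 := fact_div_upper N 30 (by omega) (by omega)
  have h3 := fact_div_lower N 2 (by omega) (by omega)
  have h4 := fact_div_lower N 3 (by omega) (by omega)
  have h5 := fact_div_lower N 5 (by omega) (by omega)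
  have hN0 : (0 : ℝ) < N := by exact_mod_cast (by omega : 0 < N)
  unfold H at *
  push_cast at *
  rw [Real.log_div hN0.ne' (by norm_num)] at h2 h3 h4 h5
  have e30 : Real.log 30 = Real.log 2 + Real.log 3 + Real.log 5 := by
    rw [← Real.log_mul (by norm_num) (by norm_num), ← Real.log_mul (by norm_num) (by norm_num)]
    norm_num
  rw [e30] at h2
  have l2 := mul_le_mul_of_nonneg_left Real.log_two_lt_d9.le hN0.le
  have l3 := mul_le_mul_of_nonneg_left Real.log_three_lt_d9.le hN0.le
  have l5 := mul_le_mul_of_nonneg_left Real.log_five_lt_d9.le hN0.le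
  ring_nf at *
  linarith

theorem psi_bound (N : ℕ) : 1 ≤ N →
    Chebyshev.psi (N : ℝ) ≤ 1.106 * N + 1.4 * Real.log N ^ 2 + 2 * Real.log N := by
  induction N using Nat.strong_induction_on with
  | _ N ih =>
    intro hN
    have hl : 0 ≤ Real.log N := Real.log_natCast_nonneg N
    rcases lt_or_ge N 6 with h | h
    · have h1 := Chebyshev.psi_le_primeCounting_mul_log N
      have h2 : Nat.primeCounting N ≤ 3 := by interval_cases N <;> decide
      have h3 : (Nat.primeCounting N : ℝ) ≤ 3 := by exact_mod_cast h2
      have h4 : (Nat.primeCounting N : ℝ) * Real.log N ≤ 3 * Real.log N := by gcongr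
      have h5 : Real.log N ≤ N - 1 := Real.log_le_sub_one_of_pos (by exact_mod_cast hN)
      nlinarith [sq_nonneg (Real.log N)]
    · have hM : 1 ≤ N / 6 := by omega
      have i := ih (N / 6) (by omega) hM
      have s := cheb_step N (by omega)
      have hN0 : (0 : ℝ) < N := by exact_mod_cast (by omega : 0 < N)
      have hd : ((N / 6 : ℕ) : ℝ) ≤ N / 6 := by exact_mod_cast Nat.cast_div_le (α := ℝ) (m := N) (n := 6)
      have hlM : Real.log ((N / 6 : ℕ) : ℝ) ≤ Real.log N - Real.log 6 := by
        rw [← Real.log_div hN0.ne' (by norm_num)]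
        exact Real.log_le_log (by exact_mod_cast hM) hd
      have hlM0 : 0 ≤ Real.log ((N / 6 : ℕ) : ℝ) := Real.log_natCast_nonneg _
      have e6 : Real.log 6 = Real.log 2 + Real.log 3 := by
        rw [← Real.log_mul (by norm_num) (by norm_num)]; norm_num
      have b1 : 1.7917 ≤ Real.log 6 := by
        rw [e6]; linarith [Real.log_two_gt_d9, Real.log_three_gt_d9]
      have hlM' : Real.log ((N / 6 : ℕ) : ℝ) ≤ Real.log N - 1.7917 := by linarith
      have hsq : Real.log ((N / 6 : ℕ) : ℝ) ^ 2 ≤ (Real.log N - 1.7917) ^ 2 := by gcongr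
      nlinarith

theorem theta_bound (N : ℕ) (hN : 20000 ≤ N) : Chebyshev.theta (N : ℝ) ≤ 1.114 * N := by
  have h1 := (Chebyshev.theta_le_psi (N : ℝ)).trans (psi_bound N (by omega))
  have hN' : (20000 : ℝ) ≤ N := by exact_mod_cast hN
  have hl : 0 ≤ Real.log N := Real.log_natCast_nonneg N
  obtain ⟨r, hr1, hr⟩ : ∃ r : ℝ, 1 ≤ r ∧ (N : ℝ) = 20000 * r ^ 2 := by
    refine ⟨Real.sqrt (N / 20000), ?_, ?_⟩
    · rw [Real.one_le_sqrt, le_div_iff₀ (by norm_num)]; linarith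
    · rw [Real.sq_sqrt (by positivity)]; ring
  have e : Real.log 20000 = 5 * Real.log 2 + 4 * Real.log 5 := by
    rw [show (20000 : ℝ) = 2 ^ 5 * 5 ^ 4 by norm_num, Real.log_mul (by norm_num) (by norm_num),
      Real.log_pow, Real.log_pow]; norm_num
  have hlr : Real.log N ≤ 9.904 + 2 * (r - 1) := by
    rw [hr, Real.log_mul (by norm_num) (by positivity), Real.log_pow, e]
    have := Real.log_le_sub_one_of_pos (show 0 < r by linarith)
    have := Real.log_two_lt_d9
    have := Real.log_five_lt_d9
    push_cast; linarith
  have hsq : Real.log N ^ 2 ≤ (9.904 + 2 * (r - 1)) ^ 2 := by gcongr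
  have hr2 : 0 ≤ (r - 1) ^ 2 := sq_nonneg _
  nlinarith

theorem V_bound (N : ℕ) (hN : 20000 ≤ N) : V N ≤ 0.14106 * N := by
  induction N, hN using Nat.le_induction with
  | base => have := small_range_bound.2; norm_num; linarith
  | succ N hN ih =>
    have hth := theta_bound N hN
    have hs := log_step N (by omega)
    have hN0 : (0 : ℝ) < N := by exact_mod_cast (by omega : 0 < N)
    have hl : (9.9 : ℝ) ≤ Real.log N := by
      have e : Real.log 20000 = 5 * Real.log 2 + 4 * Real.log 5 := by
        rw [show (20000 : ℝ) = 2 ^ 5 * 5 ^ 4 by norm_num,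
          Real.log_mul (by norm_num) (by norm_num), Real.log_pow, Real.log_pow]; norm_num
      have : Real.log 20000 ≤ Real.log N :=
        Real.log_le_log (by norm_num) (by exact_mod_cast hN)
      linarith [Real.log_two_gt_d9, Real.log_five_gt_d9]
    have hpi : (Nat.primeCounting N : ℝ) * Real.log N ≤ 1.25506 * N := by
      unfold V at ih; linarith
    have hpN : (Nat.primeCounting N : ℝ) ≤ 0.14106 * N := by
      have h0 : (0 : ℝ) ≤ Nat.primeCounting N := Nat.cast_nonneg _
      nlinarith
    have h2 := mul_le_mul_of_nonneg_left hs (Nat.cast_nonneg (α := ℝ) (Nat.primeCounting N))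
    have h3 : (Nat.primeCounting N : ℝ) * (1 / N) ≤ 0.14106 := by
      rw [mul_one_div, div_le_iff₀ hN0]; exact hpN
    rw [V_succ]
    unfold V at ih
    push_cast at *
    linarith

theorem pi_bound (n : ℕ) (hn : 4 ≤ n) :
    (Nat.primeCounting n : ℝ) * Real.log n ≤ 1.25506 * n + 0.4 := by
  have hn0 : (0 : ℝ) ≤ n := Nat.cast_nonneg _
  rcases lt_or_ge n 20000 with h | h
  · have := small_range_bound.1 n hn h; linarith
  · have h1 := V_bound n h
    have h2 := theta_bound n h
    unfold V at h1; linarith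

theorem log_four_eq : Real.log 4 = 2 * Real.log 2 := by
  rw [show (4 : ℝ) = 2 ^ 2 by norm_num, Real.log_pow]; norm_num

/-- Clearing denominators in the statement. -/
theorem reduce (n : ℕ) (hn : 2 ≤ n) (h : (Nat.primeCounting n : ℝ) * Real.log n * Real.log (2 * n)
      + n * ((Real.log 4 - 1.25506) * Real.log (2 * n) - Real.log 2 * Real.log 4)
      < (Real.log (Nat.choose (n + n) n) + Real.log (2 * n)) * Real.log n) :
    kfun n n > (Nat.primeCounting n : ℝ) + E n - 1 := by
  have hn2 : (2 : ℝ) ≤ n := by exact_mod_cast hn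
  have hl : 0 < Real.log n := Real.log_pos (by linarith)
  have hl2 : 0 < Real.log (2 * n) := Real.log_pos (by linarith)
  unfold kfun E
  rw [← two_mul (n : ℝ), gt_iff_lt, ← sub_pos]
  have : Real.log (Nat.choose (n + n) n) / Real.log (2 * n) - ((Nat.primeCounting n : ℝ)
      + (n : ℝ) / Real.log n * (Real.log 4 - 1.25506
        - Real.log 2 * Real.log 4 / Real.log (2 * n)) - 1)
      = ((Real.log (Nat.choose (n + n) n) + Real.log (2 * n)) * Real.log n
        - ((Nat.primeCounting n : ℝ) * Real.log n * Real.log (2 * n)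
      + n * ((Real.log 4 - 1.25506) * Real.log (2 * n) - Real.log 2 * Real.log 4)))
        / (Real.log n * Real.log (2 * n)) := by
    field_simp; ring
  rw [this]
  apply div_pos (by linarith) (by positivity)

/-- For every `n ≥ 2`, `k(n,n) > π(n) + E(n) − 1`. -/
theorem stmt_9 (n : ℕ) (hn : n ≥ 2) :
    kfun n n > (Nat.primeCounting n : ℝ) + E n - 1 := by
  apply reduce n hn
  have a1 := Real.log_two_lt_d9
  have a2 := Real.log_two_gt_d9
  have hn2 : (2 : ℝ) ≤ n := by exact_mod_cast hn
  have hl : 0 < Real.log n := Real.log_pos (by linarith)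
  rcases lt_or_ge n 4 with h | h
  · interval_cases n
    · have hp : Nat.primeCounting 2 = 1 := by decide
      have hc : Nat.choose (2 + 2) 2 = 6 := by decide
      have e6 : Real.log 6 = Real.log 2 + Real.log 3 := by
        rw [← Real.log_mul (by norm_num) (by norm_num)]; norm_num
      rw [hp, hc]
      have b1 := Real.log_three_gt_d9
      norm_num
      rw [e6, log_four_eq]
      nlinarith
    · have hp : Nat.primeCounting 3 = 2 := by decide
      have hc : Nat.choose (3 + 3) 3 = 20 := by decide
      have e6 : Real.log 6 = Real.log 2 + Real.log 3 := by
        rw [← Real.log_mul (by norm_num) (by norm_num)]; norm_num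
      have e20 : Real.log 20 = 2 * Real.log 2 + Real.log 5 := by
        rw [← log_four_eq, ← Real.log_mul (by norm_num) (by norm_num)]; norm_num
      rw [hp, hc]
      have b1 := Real.log_three_gt_d9
      have b2 := Real.log_three_lt_d9
      have b3 := Real.log_five_gt_d9
      norm_num
      rw [e6, e20, log_four_eq]
      nlinarith
  · have hpi := pi_bound n h
    have hcb := Nat.four_pow_lt_mul_centralBinom n h
    rw [Nat.centralBinom_eq_two_mul_choose, two_mul] at hcb
    have hch : 0 < Nat.choose (n + n) n := Nat.choose_pos (by omega)
    have hlog : n * Real.log 4 < Real.log n + Real.log (Nat.choose (n + n) n) := by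
      rw [← Real.log_pow, ← Real.log_mul (by positivity) (by positivity)]
      apply Real.log_lt_log (by positivity)
      exact_mod_cast hcb
    have e2 : Real.log (2 * n) = Real.log 2 + Real.log n :=
      Real.log_mul (by norm_num) (by positivity)
    have hl4 : 2 * Real.log 2 ≤ Real.log n := by
      rw [← log_four_eq]
      exact Real.log_le_log (by norm_num) (by exact_mod_cast h)
    have m1 := mul_lt_mul_of_pos_right hlog hl
    have m2 := mul_le_mul_of_nonneg_right hpi (show 0 ≤ Real.log 2 + Real.log n by linarith)
    have m3 : 0.4 * (Real.log 2 + Real.log n) ≤ Real.log 2 * Real.log n := by nlinarith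
    rw [e2]
    nlinarith
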